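/- If the general linear group GL(V) of an n-dimensional real vector space V has an open orbit on Λ^p V*, then it also has an open orbit on Λ^{n-p} V*. -/

import Mathlib

noncomputable section

/-- The orbit of a (continuous) alternating `p`-form `ρ` on `V = ℝⁿ` under the natural
action of `GL(V)` (by pullback along invertible linear maps). -/
def glOrbit (n p : ℕ) (ρ : (EuclideanSpace ℝ (Fin n)) [⋀^Fin p]→L[ℝ] ℝ) :
    Set ((EuclideanSpace ℝ (Fin n)) [⋀^Fin p]→L[ℝ] ℝ) :=
  {σ | ∃ g : EuclideanSpace ℝ (Fin n) ≃L[ℝ] EuclideanSpace ℝ (Fin n),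
    σ = ρ.compContinuousLinearMap
      (g : EuclideanSpace ℝ (Fin n) →L[ℝ] EuclideanSpace ℝ (Fin n))}

namespace StableForms

open Module Topology

/-- Euclidean `n`-space. -/
abbrev E (n : ℕ) := EuclideanSpace ℝ (Fin n)

/-- The standard basis. -/
abbrev eb (n : ℕ) : Basis (Fin n) ℝ (E n) := (EuclideanSpace.basisFun (Fin n) ℝ).toBasis

lemma mem_glOrbit_iff {n p : ℕ} (ρ σ : (E n) [⋀^Fin p]→L[ℝ] ℝ) :
    σ ∈ glOrbit n p ρ ↔ ∃ u : (E n →L[ℝ] E n)ˣ,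
      σ = ρ.compContinuousLinearMap (u : E n →L[ℝ] E n) := by
  constructor
  · rintro ⟨g, rfl⟩
    exact ⟨(ContinuousLinearEquiv.unitsEquiv ℝ (E n)).symm g, rfl⟩
  · rintro ⟨u, rfl⟩
    exact ⟨ContinuousLinearEquiv.unitsEquiv ℝ (E n) u, rfl⟩

lemma ext_basis {n p : ℕ} {ρ σ : (E n) [⋀^Fin p]→L[ℝ] ℝ}
    (h : ∀ t : Fin p → Fin n, Function.Injective t →
      ρ (fun i => eb n (t i)) = σ (fun i => eb n (t i))) : ρ = σ := by
  apply ContinuousAlternatingMap.toAlternatingMap_injective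
  exact Basis.ext_alternating (eb n) h

instance finite_forms (n p : ℕ) : FiniteDimensional ℝ ((E n) [⋀^Fin p]→L[ℝ] ℝ) := by
  let L : ((E n) [⋀^Fin p]→L[ℝ] ℝ) →ₗ[ℝ] ((Fin p → Fin n) → ℝ) :=
    { toFun := fun ρ t => ρ (fun i => eb n (t i))
      map_add' := fun _ _ => rfl
      map_smul' := fun _ _ => rfl }
  refine Module.Finite.of_injective L ?_
  intro ρ σ h
  exact ext_basis fun t _ => congrFun h t

lemma continuous_pull {n p : ℕ} (ρ : (E n) [⋀^Fin p]→L[ℝ] ℝ) :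
    Continuous (fun f : E n →L[ℝ] E n => ρ.compContinuousLinearMap f) :=
  (ContinuousAlternatingMap.continuous_compContinuousLinearMapCLM
    (𝕜 := ℝ) (E := E n) (F := E n) (G := ℝ) (ι := Fin p)).clm_apply continuous_const

lemma pull_pull {n p : ℕ} (ρ : (E n) [⋀^Fin p]→L[ℝ] ℝ) (f g : E n →L[ℝ] E n) :
    (ρ.compContinuousLinearMap f).compContinuousLinearMap g =
      ρ.compContinuousLinearMap (f * g) := rfl

/-- An orbit with nonempty interior is open. -/
lemma isOpen_of_interior {n p : ℕ} (ρ : (E n) [⋀^Fin p]→L[ℝ] ℝ)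
    (h : (interior (glOrbit n p ρ)).Nonempty) : IsOpen (glOrbit n p ρ) := by
  obtain ⟨x, hx⟩ := h
  obtain ⟨g, hg⟩ := (mem_glOrbit_iff _ _).1 (interior_subset hx)
  rw [← subset_interior_iff_isOpen]
  intro y hy
  obtain ⟨k, hk⟩ := (mem_glOrbit_iff _ _).1 hy
  let c := ContinuousAlternatingMap.compContinuousLinearMapCLM (𝕜 := ℝ) (F := ℝ) (ι := Fin p)
    ((k⁻¹ * g : (E n →L[ℝ] E n)ˣ) : E n →L[ℝ] E n)
  rw [mem_interior]
  refine ⟨c ⁻¹' interior (glOrbit n p ρ), ?_, isOpen_interior.preimage c.continuous, ?_⟩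
  · intro z hz
    obtain ⟨m, hm⟩ := (mem_glOrbit_iff _ _).1 (interior_subset hz)
    rw [mem_glOrbit_iff]
    refine ⟨m * (g⁻¹ * k), ?_⟩
    have hm' : z.compContinuousLinearMap ((k⁻¹ * g : (E n →L[ℝ] E n)ˣ) : E n →L[ℝ] E n) =
      ρ.compContinuousLinearMap (m : E n →L[ℝ] E n) := hm
    rw [Units.val_mul, ← pull_pull, ← hm', pull_pull, ← Units.val_mul]
    have : k⁻¹ * g * (g⁻¹ * k) = 1 := by group
    rw [this]
    rfl
  · have : c y = x := by
      change y.compContinuousLinearMap ((k⁻¹ * g : (E n →L[ℝ] E n)ˣ) : E n →L[ℝ] E n) = x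
      rw [hk, pull_pull, ← Units.val_mul, hg]
      congr 2
      group
    rwa [Set.mem_preimage, this]

/-- Orbits are countable unions of compact sets. -/
lemma orbit_sigma {n p : ℕ} (ρ : (E n) [⋀^Fin p]→L[ℝ] ℝ) :
    ∃ K : ℕ × ℕ → Set ((E n) [⋀^Fin p]→L[ℝ] ℝ), (∀ i, IsClosed (K i)) ∧
      glOrbit n p ρ = ⋃ i, K i := by
  have hU : IsOpen (Set.range (Units.val : (E n →L[ℝ] E n)ˣ → (E n →L[ℝ] E n))) :=
    Units.isOpenEmbedding_val.isOpen_range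
  obtain ⟨F, hF, -, hFU, -⟩ := hU.exists_iUnion_isClosed
  have : ProperSpace (E n →L[ℝ] E n) := FiniteDimensional.proper ℝ _
  refine ⟨fun i => (fun f : E n →L[ℝ] E n => ρ.compContinuousLinearMap f) ''
    (F i.1 ∩ Metric.closedBall 0 i.2), fun i => ?_, ?_⟩
  · exact (((isCompact_closedBall _ _).inter_left (hF i.1)).image (continuous_pull ρ)).isClosed
  · ext σ
    rw [mem_glOrbit_iff, Set.mem_iUnion]
    constructor
    · rintro ⟨u, rfl⟩
      have : (u : E n →L[ℝ] E n) ∈ ⋃ k, F k := by rw [hFU]; exact ⟨u, rfl⟩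
      obtain ⟨k, hk⟩ := Set.mem_iUnion.1 this
      obtain ⟨m, hm⟩ := exists_nat_ge ‖(u : E n →L[ℝ] E n)‖
      exact ⟨(k, m), u, ⟨hk, by simpa using hm⟩, rfl⟩
    · rintro ⟨i, f, ⟨hf, -⟩, rfl⟩
      have : f ∈ ⋃ k, F k := Set.mem_iUnion.2 ⟨_, hf⟩
      rw [hFU] at this
      obtain ⟨u, rfl⟩ := this
      exact ⟨u, rfl⟩

lemma orbit_meagre {n p : ℕ} (ρ : (E n) [⋀^Fin p]→L[ℝ] ℝ)
    (h : ¬ (interior (glOrbit n p ρ)).Nonempty) : IsMeagre (glOrbit n p ρ) := by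
  obtain ⟨K, hK, hKU⟩ := orbit_sigma ρ
  rw [hKU]
  refine isMeagre_iUnion fun i => IsNowhereDense.isMeagre ?_
  rw [(hK i).isNowhereDense_iff]
  by_contra hne
  apply h
  rw [hKU]
  exact (Set.nonempty_iff_ne_empty.2 hne).mono (interior_mono (Set.subset_iUnion K i))

/-- If a nonempty open set lies in `O(σ) ∪ O(-σ)` then `O(σ)` or `O(-σ)` is open. -/
lemma open_of_subset {n p : ℕ} (σ : (E n) [⋀^Fin p]→L[ℝ] ℝ)
    (U : Set ((E n) [⋀^Fin p]→L[ℝ] ℝ)) (hU : IsOpen U) (hne : U.Nonempty)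
    (h : U ⊆ glOrbit n p σ ∪ glOrbit n p (-σ)) :
    ∃ τ : (E n) [⋀^Fin p]→L[ℝ] ℝ, IsOpen (glOrbit n p τ) := by
  by_contra! hcon
  have : CompleteSpace ((E n) [⋀^Fin p]→L[ℝ] ℝ) := FiniteDimensional.complete ℝ _
  refine not_isMeagre_of_isOpen hU hne (IsMeagre.mono h (IsMeagre.union ?_ ?_))
  · exact orbit_meagre _ fun h => hcon _ (isOpen_of_interior _ h)
  · exact orbit_meagre _ fun h => hcon _ (isOpen_of_interior _ h)

/-- The volume form, with a split index set. -/
def vol {n p q : ℕ} (c : Fin n ≃ Fin p ⊕ Fin q) : (E n) [⋀^Fin p ⊕ Fin q]→ₗ[ℝ] ℝ :=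
  (eb n).det.domDomCongr c

lemma vol_comp {n p q : ℕ} (c : Fin n ≃ Fin p ⊕ Fin q) (f : E n →ₗ[ℝ] E n)
    (v : Fin p ⊕ Fin q → E n) : vol c (f ∘ v) = LinearMap.det f * vol c v := by
  simp only [vol, AlternatingMap.domDomCongr_apply]
  exact (eb n).det_comp f (v ∘ c)

lemma vol_cont {n p q : ℕ} (c : Fin n ≃ Fin p ⊕ Fin q) : Continuous (vol c) := by
  have : (vol c : (Fin p ⊕ Fin q → E n) → ℝ) = fun v =>
      ((eb n).toMatrix (fun i => v (c i))).det := by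
    ext v
    simp [vol, Basis.det_apply, Function.comp_def]
  rw [this]
  refine Continuous.matrix_det ?_
  refine continuous_matrix fun i j => ?_
  simp only [Basis.toMatrix_apply]
  simp
  fun_prop

/-- Partial evaluation of the volume form. -/
def part {n p q : ℕ} (c : Fin n ≃ Fin p ⊕ Fin q) (a : Fin p → E n) :
    (E n) [⋀^Fin q]→L[ℝ] ℝ :=
  { (vol c).toMultilinearMap.currySum a with
    cont := by
      change Continuous fun w : Fin q → E n => vol c (Sum.elim a w)
      refine (vol_cont c).comp (continuous_pi fun i => ?_)
      rcases i with i | i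
      · exact continuous_const
      · exact continuous_apply i
    map_eq_zero_of_eq' := by
      intro v i j hij hne
      change vol c (Sum.elim a v) = 0
      exact (vol c).map_eq_zero_of_eq _ (i := Sum.inr i) (j := Sum.inr j) hij (by simpa using hne) }

lemma part_apply {n p q : ℕ} (c : Fin n ≃ Fin p ⊕ Fin q) (a : Fin p → E n) (w : Fin q → E n) :
    part c a w = vol c (Sum.elim a w) := rfl

/-- The star operator (up to a constant). -/
def starOp {n p q : ℕ} (c : Fin n ≃ Fin p ⊕ Fin q) :
    ((E n) [⋀^Fin p]→L[ℝ] ℝ) →ₗ[ℝ] ((E n) [⋀^Fin q]→L[ℝ] ℝ) where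
  toFun ρ := ∑ s : Fin p → Fin n, ρ (fun i => eb n (s i)) • part c (fun i => eb n (s i))
  map_add' ρ σ := by
    simp [add_smul, Finset.sum_add_distrib]
  map_smul' r ρ := by
    simp [mul_smul, Finset.smul_sum]

lemma starOp_apply {n p q : ℕ} (c : Fin n ≃ Fin p ⊕ Fin q) (ρ : (E n) [⋀^Fin p]→L[ℝ] ℝ)
    (w : Fin q → E n) : starOp c ρ w = ∑ s : Fin p → Fin n, ρ (fun i => eb n (s i)) *
      vol c (Sum.elim (fun i => eb n (s i)) w) := by
  simp [starOp, part_apply, ContinuousAlternatingMap.sum_apply]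

lemma starOp_injective {n p q : ℕ} (c : Fin n ≃ Fin p ⊕ Fin q) :
    Function.Injective (starOp c) := by
  rw [← LinearMap.ker_eq_bot, LinearMap.ker_eq_bot']
  intro ρ hρ
  apply ext_basis
  intro t ht
  by_contra hne
  change ρ (fun i => eb n (t i)) ≠ 0 at hne
  obtain ⟨d, hd⟩ : ∃ d : Fin p ⊕ Fin q ≃ Fin n, ∀ i, d (Sum.inl i) = t i := by
    have hci : Function.Injective (fun i : Fin p => c.symm (Sum.inl i)) :=
      c.symm.injective.comp Sum.inl_injective
    let f : Set.range (fun i : Fin p => c.symm (Sum.inl i)) ≃ Set.range t :=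
      (Equiv.ofInjective _ hci).symm.trans (Equiv.ofInjective t ht)
    classical
    let P : Equiv.Perm (Fin n) := Equiv.extendSubtype
      (p := fun x => x ∈ Set.range (fun i : Fin p => c.symm (Sum.inl i)))
      (q := fun x => x ∈ Set.range t) f
    refine ⟨c.symm.trans P, fun i => ?_⟩
    have h1 : P (c.symm (Sum.inl i)) = f ⟨c.symm (Sum.inl i), ⟨i, rfl⟩⟩ :=
      Equiv.extendSubtype_apply_of_mem _ _ _
    rw [Equiv.trans_apply, h1]
    have h2 : (Equiv.ofInjective _ hci).symm ⟨c.symm (Sum.inl i), ⟨i, rfl⟩⟩ = i :=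
      Equiv.ofInjective_symm_apply hci i
    simp only [f, Equiv.trans_apply]
    rw [h2]
    rfl
  have hvol : vol c (fun i => eb n (d i)) ≠ 0 := by
    have := (AlternatingMap.map_basis_ne_zero_iff ((eb n).reindex d.symm) (vol c)).2 ?_
    · simpa [Function.comp_def] using this
    · intro h0
      have h1 : vol c (fun i => eb n (c.symm i)) = 1 := by
        simp only [vol, AlternatingMap.domDomCongr_apply, Function.comp_def,
          Equiv.symm_apply_apply]
        exact (eb n).det_self
      rw [h0] at h1
      simp at h1
  set u : Fin q → Fin n := fun j => d (Sum.inr j) with hu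
  have hz := starOp_apply c ρ (fun j => eb n (u j))
  rw [hρ] at hz
  set C : ℝ := ρ (fun i => eb n (t i)) * vol c (fun i => eb n (d i)) with hC
  have hC0 : C ≠ 0 := mul_ne_zero hne hvol
  have key : ∀ s : Fin p → Fin n, ρ (fun i => eb n (s i)) *
      vol c (Sum.elim (fun i => eb n (s i)) (fun j => eb n (u j))) = 0 ∨
      ρ (fun i => eb n (s i)) *
      vol c (Sum.elim (fun i => eb n (s i)) (fun j => eb n (u j))) = C := by
    intro s
    by_cases hinj : Function.Injective (Sum.elim s u)
    · right
      have hs : Function.Injective s := hinj.comp Sum.inl_injective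
      have h1 : ∀ i, ∃ k, s i = t k := by
        intro i
        rcases hk : d.symm (s i) with k | k
        · refine ⟨k, ?_⟩
          rw [← hd, ← hk]; simp
        · exfalso
          have : s i = u k := by rw [hu]; simp [← hk]
          have := @hinj (Sum.inl i) (Sum.inr k) this
          simp at this
      choose π hπ using h1
      have hπi : Function.Injective π := by
        intro a b hab
        apply hs
        rw [hπ, hπ, hab]
      let P : Equiv.Perm (Fin p) := Equiv.ofBijective π (Finite.injective_iff_bijective.1 hπi)
      have e1 : ρ (fun i => eb n (s i)) = (Equiv.Perm.sign P : ℤ) • ρ (fun i => eb n (t i)) := by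
        have := ρ.toAlternatingMap.map_perm (fun i => eb n (t i)) P
        rw [← Units.smul_def]
        refine Eq.trans ?_ this
        simp only [hπ]
        rfl
      have e2 : vol c (Sum.elim (fun i => eb n (s i)) (fun j => eb n (u j))) =
          (Equiv.Perm.sign P : ℤ) • vol c (fun i => eb n (d i)) := by
        have := (vol c).map_perm (fun i => eb n (d i)) (Equiv.sumCongr P (Equiv.refl _))
        rw [← Equiv.Perm.sumCongr, Equiv.Perm.sign_sumCongr] at this
        rw [← Units.smul_def]
        refine Eq.trans ?_ (this.trans (by simp))
        congr 1
        ext1 i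
        rcases i with i | i
        · simp [hd, hπ, P]
        · simp [hu]
      rw [e1, e2, hC]
      rcases Int.units_eq_one_or (Equiv.Perm.sign P) with h | h <;> simp [h]
    · left
      rw [(vol c).map_eq_zero_of_not_injective, mul_zero]
      intro h
      apply hinj
      have : Sum.elim (fun i => eb n (s i)) (fun j => eb n (u j)) = eb n ∘ Sum.elim s u := by
        ext1 i; rcases i with i | i <;> rfl
      rw [this] at h
      exact h.of_comp
  have ht' : ρ (fun i => eb n (t i)) *
      vol c (Sum.elim (fun i => eb n (t i)) (fun j => eb n (u j))) = C := by
    rw [hC]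
    congr 2
    ext1 i
    rcases i with i | i
    · simp [hd]
    · simp [hu]
  have hpos : 0 < ∑ s : Fin p → Fin n, (ρ (fun i => eb n (s i)) *
      vol c (Sum.elim (fun i => eb n (s i)) (fun j => eb n (u j)))) * C := by
    refine Finset.sum_pos' (fun s _ => ?_) ⟨t, Finset.mem_univ _, ?_⟩
    · rcases key s with h | h <;> rw [h]
      · simp
      · exact mul_self_nonneg C
    · rw [ht']
      exact mul_self_pos.2 hC0
  rw [← Finset.sum_mul, ← hz] at hpos
  simp at hpos

lemma starOp_surjective {n p q : ℕ} (c : Fin n ≃ Fin p ⊕ Fin q) :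
    Function.Surjective (starOp c) := by
  have h1 := LinearMap.finrank_le_finrank_of_injective (starOp_injective c)
  have h2 := LinearMap.finrank_le_finrank_of_injective
    (starOp_injective (c.trans (Equiv.sumComm _ _)))
  exact (LinearMap.injective_iff_surjective_of_finrank_eq_finrank (le_antisymm h1 h2)).1
    (starOp_injective c)

lemma expand {n p : ℕ} {W : Type*} [AddCommGroup W] [Module ℝ W]
    (M : MultilinearMap ℝ (fun _ : Fin p => E n) W) (A : Fin p → Fin n → ℝ) :
    M (fun k => ∑ j, A k j • eb n j) =
      ∑ s : Fin p → Fin n, (∏ k, A k (s k)) • M (fun k => eb n (s k)) := by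
  rw [MultilinearMap.map_sum]
  refine Finset.sum_congr rfl fun s _ => ?_
  rw [MultilinearMap.map_smul_univ]

lemma starOp_pull {n p q : ℕ} (c : Fin n ≃ Fin p ⊕ Fin q) (ρ : (E n) [⋀^Fin p]→L[ℝ] ℝ)
    (g : (E n →L[ℝ] E n)ˣ) : ∃ (d : ℝ) (h : (E n →L[ℝ] E n)ˣ),
    starOp c (ρ.compContinuousLinearMap (g : E n →L[ℝ] E n)) =
      d • (starOp c ρ).compContinuousLinearMap (h : E n →L[ℝ] E n) := by
  let gT : (E n →L[ℝ] E n)ˣ := star g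
  let G : Fin n → Fin n → ℝ := fun i j => inner ℝ (eb n i) ((g : E n →L[ℝ] E n) (eb n j))
  have hg : ∀ j, (g : E n →L[ℝ] E n) (eb n j) = ∑ i, G i j • eb n i := by
    intro j
    have := (EuclideanSpace.basisFun (Fin n) ℝ).sum_repr' ((g : E n →L[ℝ] E n) (eb n j))
    rw [← this]
    simp [G]
  have hgT : ∀ j, (gT : E n →L[ℝ] E n) (eb n j) = ∑ i, G j i • eb n i := by
    intro j
    have := (EuclideanSpace.basisFun (Fin n) ℝ).sum_repr' ((gT : E n →L[ℝ] E n) (eb n j))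
    rw [← this]
    refine Finset.sum_congr rfl fun i _ => ?_
    have : (gT : E n →L[ℝ] E n) = ContinuousLinearMap.adjoint (g : E n →L[ℝ] E n) := rfl
    rw [this, ContinuousLinearMap.adjoint_inner_right, real_inner_comm]
    simp [G]
  refine ⟨LinearMap.det ((gT : E n →L[ℝ] E n) : E n →ₗ[ℝ] E n), gT⁻¹, ?_⟩
  ext w
  rw [starOp_apply, ContinuousAlternatingMap.smul_apply,
    ContinuousAlternatingMap.compContinuousLinearMap_apply, starOp_apply, smul_eq_mul,
    Finset.mul_sum]
  have h1 : ∀ s : Fin p → Fin n, (ρ.compContinuousLinearMap (g : E n →L[ℝ] E n))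
      (fun i => eb n (s i)) =
      ∑ r : Fin p → Fin n, (∏ k, G (r k) (s k)) * ρ (fun k => eb n (r k)) := by
    intro s
    rw [ContinuousAlternatingMap.compContinuousLinearMap_apply]
    have := expand ρ.toMultilinearMap (fun k i => G i (s k))
    refine Eq.trans ?_ this
    simp only [← hg]
    rfl
  have h2 : ∀ r : Fin p → Fin n,
      LinearMap.det ((gT : E n →L[ℝ] E n) : E n →ₗ[ℝ] E n) *
        vol c (Sum.elim (fun i => eb n (r i)) (((gT⁻¹ : (E n →L[ℝ] E n)ˣ) : E n →L[ℝ] E n) ∘ w))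
      = ∑ s : Fin p → Fin n, (∏ k, G (r k) (s k)) *
        vol c (Sum.elim (fun i => eb n (s i)) w) := by
    intro r
    rw [← vol_comp]
    have := congrArg (fun m => m w) (expand ((vol c).toMultilinearMap.currySum) (fun k i => G (r k) i))
    simp only [← hgT, sum_apply, smul_apply,
      MultilinearMap.currySum_apply', smul_eq_mul] at this
    refine Eq.trans ?_ this
    change vol c _ = vol c _
    congr 1
    ext1 i
    rcases i with i | i
    · rfl
    · change ((gT * gT⁻¹ : (E n →L[ℝ] E n)ˣ) : E n →L[ℝ] E n) (w i) = w i
      simp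
  simp only [h1, Finset.sum_mul]
  rw [Finset.sum_comm]
  refine Finset.sum_congr rfl fun r _ => ?_
  rw [mul_left_comm, h2, Finset.mul_sum]
  refine Finset.sum_congr rfl fun s _ => ?_
  ring

lemma smul_mem {n q : ℕ} (hq : 0 < q) (σ : (E n) [⋀^Fin q]→L[ℝ] ℝ) (d : ℝ) (hd : 0 < d)
    (h : (E n →L[ℝ] E n)ˣ) :
    d • σ.compContinuousLinearMap (h : E n →L[ℝ] E n) ∈ glOrbit n q σ := by
  rw [mem_glOrbit_iff]
  set r : ℝ := d ^ ((q : ℝ)⁻¹) with hr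
  have hr0 : 0 < r := Real.rpow_pos_of_pos hd _
  have hrq : r ^ q = d := Real.rpow_inv_natCast_pow hd.le hq.ne'
  refine ⟨Units.map (algebraMap ℝ (E n →L[ℝ] E n)).toMonoidHom (Units.mk0 r hr0.ne') * h, ?_⟩
  ext w
  rw [ContinuousAlternatingMap.smul_apply, ContinuousAlternatingMap.compContinuousLinearMap_apply,
    ContinuousAlternatingMap.compContinuousLinearMap_apply]
  have := σ.toMultilinearMap.map_smul_univ (fun _ => r) ((h : E n →L[ℝ] E n) ∘ w)
  simp only [Finset.prod_const, Finset.card_univ, Fintype.card_fin, hrq] at this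
  exact this.symm

theorem main {n p q : ℕ} (hq : 0 < q) (c : Fin n ≃ Fin p ⊕ Fin q)
    (h : ∃ ρ : (E n) [⋀^Fin p]→L[ℝ] ℝ, IsOpen (glOrbit n p ρ)) :
    ∃ σ : (E n) [⋀^Fin q]→L[ℝ] ℝ, IsOpen (glOrbit n q σ) := by
  obtain ⟨ρ, hρ⟩ := h
  have hop := (starOp c).isOpenMap_of_finiteDimensional (starOp_surjective c)
  by_cases h0 : starOp c ρ = 0
  · refine open_of_subset 0 _ (hop _ hρ) ⟨_, ρ, (mem_glOrbit_iff _ _).2 ⟨1, rfl⟩, rfl⟩ ?_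
    rintro _ ⟨τ, hτ, rfl⟩
    obtain ⟨g, rfl⟩ := (mem_glOrbit_iff _ _).1 hτ
    obtain ⟨d, k, hdk⟩ := starOp_pull c ρ g
    left
    rw [hdk, h0, mem_glOrbit_iff]
    refine ⟨1, ?_⟩
    ext w
    simp
  refine open_of_subset (starOp c ρ) _ (hop _ hρ) ⟨_, ρ, (mem_glOrbit_iff _ _).2 ⟨1, rfl⟩, rfl⟩ ?_
  rintro _ ⟨τ, hτ, rfl⟩
  obtain ⟨g, rfl⟩ := (mem_glOrbit_iff _ _).1 hτ
  obtain ⟨d, k, hdk⟩ := starOp_pull c ρ g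
  rcases lt_trichotomy d 0 with hd | hd | hd
  · right
    rw [hdk]
    have := smul_mem hq (-(starOp c ρ)) (-d) (by linarith) k
    convert this using 1
    ext w
    simp
  · exfalso
    rw [hd, zero_smul] at hdk
    have h1 : ρ.compContinuousLinearMap (g : E n →L[ℝ] E n) = 0 :=
      starOp_injective c (by rw [hdk, map_zero])
    apply h0
    have h2 : ρ = (ρ.compContinuousLinearMap (g : E n →L[ℝ] E n)).compContinuousLinearMap
        ((g⁻¹ : (E n →L[ℝ] E n)ˣ) : E n →L[ℝ] E n) := by
      rw [pull_pull, ← Units.val_mul, mul_inv_cancel]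
      rfl
    rw [h2, h1]
    convert map_zero (starOp c)
    ext w
    rfl
  · left
    rw [hdk]
    exact smul_mem hq _ _ hd k

end StableForms

/-- If `GL(V)` has an open orbit on `Λ^p V*` (i.e. some `p`-form is stable),
then it also has an open orbit on `Λ^{n-p} V*`. -/
theorem open_orbit_complementary_degree (n p : ℕ) (hp : 0 < p) (hpn : p < n)
    (h : ∃ ρ : (EuclideanSpace ℝ (Fin n)) [⋀^Fin p]→L[ℝ] ℝ, IsOpen (glOrbit n p ρ)) :
    ∃ σ : (EuclideanSpace ℝ (Fin n)) [⋀^Fin (n - p)]→L[ℝ] ℝ, IsOpen (glOrbit n (n - p) σ) := by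
  refine StableForms.main (Nat.sub_pos_of_lt hpn) ?_ h
  exact (finCongr (by omega : n = p + (n - p))).trans finSumFinEquiv.symm
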